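/- Let R be a Prüfer domain of Krull dimension at most 1 and let M ∈ M_n(R) be a square matrix with d = det M ≠ 0. Then there exists a decreasing chain of ideals a_1 ⊇ a_2 ⊇ ⋯ ⊇ a_n of R such that d ∈ a_i for every i, ∏_{i=1}^n a_i = ⟨d⟩, and the cokernel R^n ⧸ range(M·(−)) (quotient of R^n by the image of the linear map X ↦ M·X) is isomorphic to ⊕_{i=1}^n R/a_i. -/

import Mathlib

/-!
Put `d = det M`. Since `d • Rⁿ = M (adj M) Rⁿ` lies in the image of `M`, the cokernel of `M` is
determined by `M` over `A = R ⧸ (d)`. This ring is arithmetical and zero-dimensional, so up to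
splitting `A` by an idempotent, one of any two elements divides the other. Gluing row and column
swaps along such idempotents makes the pivot divide all entries, and elimination then gives a Smith
normal form `diag(c₁, …, cₙ)` over `A`. The ideals `aᵢ` are the preimages of `(cᵢ)` in `R`.
That `d ∈ ∏ aᵢ` follows from `d ^ n ∈ ∏ aᵢ` and `u * d ∈ ∏ aᵢ`, where `u` is the determinant
of a lift to `R` of the transformations, hence coprime to `d`.
-/

/-- Arithmetical rings, i.e. commutative rings whose localizations at primes are chain rings,
encoded elementwise: at each prime one of `s` and `1 - s` is invertible. -/
def IsArithmeticalRing (R : Type*) [CommRing R] : Prop :=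
  ∀ a b : R, ∃ s, b ∣ s * a ∧ a ∣ (1 - s) * b

/-- Rings in which, for any two elements, an idempotent `e` splits the ring into a factor on which
the second divides the first (where `e = 1`) and one on which the first divides the second (where
`e = 0`). -/
def IsDvdTotalUpToIdempotent (A : Type*) [CommRing A] : Prop :=
  ∀ a b : A, ∃ e, IsIdempotentElem e ∧ b ∣ e * a ∧ a ∣ (1 - e) * b

section Rings

variable {R : Type*} [CommRing R]

lemma exists_dvd_mul_of_span_pair_mul_eq {a b c : R} {J : Ideal R} (hc : IsLeftRegular c)
    (hJ : Ideal.span {a, b} * J = Ideal.span {c}) :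
    ∃ s, b ∣ s * a ∧ a ∣ (1 - s) * b := by
  have dvd_of_mem {z x : R} (hz : z ∈ Ideal.span {a, b}) (hx : x ∈ J) : c ∣ z * x :=
    Ideal.mem_span_singleton.1 (hJ ▸ Ideal.mul_mem_mul hz hx)
  have ha : a ∈ Ideal.span {a, b} := Ideal.subset_span (by simp)
  have hb : b ∈ Ideal.span {a, b} := Ideal.subset_span (by simp)
  obtain ⟨x, hx, y, hy, hxy⟩ : ∃ x ∈ J, ∃ y ∈ J, a * x + b * y = c := by
    have hcJ : c ∈ Ideal.span {a} * J ⊔ Ideal.span {b} * J := by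
      rw [← Ideal.sup_mul, ← Ideal.span_insert, hJ]
      exact Ideal.mem_span_singleton_self c
    simpa [Submodule.mem_sup, Ideal.mem_span_singleton_mul] using hcJ
  obtain ⟨s, hs⟩ := dvd_of_mem hb hy
  obtain ⟨u, hu⟩ := dvd_of_mem ha hy
  obtain ⟨t, ht⟩ := dvd_of_mem hb hx
  refine ⟨s, ⟨u, hc ?_⟩, ⟨t, hc ?_⟩⟩
  · linear_combination b * hu - a * hs
  · linear_combination b * hs + a * ht - b * hxy

lemma IsArithmeticalRing.of_forall_span_pair_invertible
    (h : ∀ a b : R, Ideal.span {a, b} ≠ ⊥ →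
      ∃ (J : Ideal R) (c : R), IsLeftRegular c ∧ Ideal.span {a, b} * J = Ideal.span {c}) :
    IsArithmeticalRing R := by
  intro a b
  by_cases hab : Ideal.span {a, b} = ⊥
  · obtain ⟨rfl, rfl⟩ : a = 0 ∧ b = 0 := by simpa [Ideal.span_eq_bot] using hab
    exact ⟨0, by simp⟩
  · obtain ⟨J, c, hc, hJ⟩ := h a b hab
    exact exists_dvd_mul_of_span_pair_mul_eq hc hJ

lemma IsArithmeticalRing.of_surjective {S : Type*} [CommRing S] (hR : IsArithmeticalRing R)
    (f : R →+* S) (hf : Function.Surjective f) : IsArithmeticalRing S := by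
  intro a b
  obtain ⟨a, rfl⟩ := hf a
  obtain ⟨b, rfl⟩ := hf b
  obtain ⟨s, hsa, hsb⟩ := hR a b
  exact ⟨f s, by simpa using map_dvd f hsa, by simpa using map_dvd f hsb⟩

lemma krullDimLE_one_of_forall_not_lt_lt [IsDomain R]
    (h : ∀ p q r : Ideal R, p.IsPrime → q.IsPrime → r.IsPrime → p < q → q < r → False) :
    Ring.KrullDimLE 1 R := by
  refine .mk₁' fun p hp hprime ↦ ?_
  obtain ⟨m, hm, hpm⟩ := p.exists_le_maximal hprime.ne_top
  obtain rfl | hlt := hpm.eq_or_lt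
  · exact hm
  · exact (h ⊥ p m Ideal.isPrime_bot hprime hm.isPrime (bot_lt_iff_ne_bot.2 hp) hlt).elim

lemma krullDimLE_quotient_span_singleton {n : ℕ} [Ring.KrullDimLE (n + 1) R] {d : R}
    (hd : d ∈ nonZeroDivisors R) : Ring.KrullDimLE n (R ⧸ Ideal.span {d}) := by
  have hdim : ringKrullDim (R ⧸ Ideal.span {d}) + 1 ≤ n + 1 :=
    (ringKrullDim_quotient_succ_le_of_nonZeroDivisor hd).trans
      (by simpa using Ring.krullDimLE_iff.1 ‹Ring.KrullDimLE (n + 1) R›)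
  exact Ring.krullDimLE_iff.2 (ENat.WithBot.add_le_add_one_right_iff.1 hdim)

variable {A : Type*} [CommRing A]

lemma exists_pow_mul_one_sub_mul_eq_zero [Ring.KrullDimLE 0 A] (s : A) :
    ∃ (k : ℕ) (y : A), s ^ k * (1 - s * y) = 0 := by
  by_contra! hne
  let S : Submonoid A :=
    { carrier := {z | ∃ (k : ℕ) (y : A), s ^ k * (1 - s * y) = z}
      one_mem' := ⟨0, 0, by simp⟩
      mul_mem' := by
        rintro _ _ ⟨k, y, rfl⟩ ⟨l, z, rfl⟩
        exact ⟨k + l, y + z - s * y * z, by ring⟩ }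
  obtain ⟨p, hp, -, hdisj⟩ := Ideal.exists_le_prime_disjoint ⊥ S <| by
    rw [Set.disjoint_left]
    rintro _ rfl ⟨k, y, hky⟩
    exact hne k y hky
  rw [Set.disjoint_left] at hdisj
  have hs : s ∉ p := fun h ↦ hdisj h ⟨1, 0, by simp⟩
  obtain ⟨y, z, hz, hyz⟩ := (Ideal.isMaximal_of_isPrime p).exists_inv hs
  exact hdisj hz ⟨0, y, by linear_combination -hyz⟩

lemma exists_isIdempotentElem_dvd_and_one_sub_dvd [Ring.KrullDimLE 0 A] (s : A) :
    ∃ e, IsIdempotentElem e ∧ s ∣ e ∧ 1 - s ∣ 1 - e := by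
  obtain ⟨k, y, hky⟩ := exists_pow_mul_one_sub_mul_eq_zero s
  have hs : s ^ (k + 1) * (1 - (s * y) ^ (k + 1)) = 0 := by
    obtain ⟨w, hw⟩ : 1 - s * y ∣ 1 - (s * y) ^ (k + 1) := one_sub_dvd_one_sub_pow _ _
    linear_combination s ^ (k + 1) * hw + s * w * hky
  refine ⟨(s * y) ^ (k + 1), ?_, ?_, ?_⟩
  · rw [IsIdempotentElem]
    linear_combination (-y ^ (k + 1)) * hs
  · exact (dvd_mul_right s y).trans (dvd_pow_self _ k.succ_ne_zero)
  · have hfactor : 1 - (s * y) ^ (k + 1) = (1 - s ^ (k + 1)) * (1 - (s * y) ^ (k + 1)) := by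
      linear_combination hs
    rw [hfactor]
    exact (one_sub_dvd_one_sub_pow s (k + 1)).mul_right _

lemma IsArithmeticalRing.isDvdTotalUpToIdempotent [Ring.KrullDimLE 0 A]
    (hA : IsArithmeticalRing A) : IsDvdTotalUpToIdempotent A := by
  intro a b
  obtain ⟨s, hsa, hsb⟩ := hA a b
  obtain ⟨e, he, hse, hse'⟩ := exists_isIdempotentElem_dvd_and_one_sub_dvd s
  exact ⟨e, he, hsa.trans (mul_dvd_mul_right hse a), hsb.trans (mul_dvd_mul_right hse' b)⟩

lemma IsArithmeticalRing.isDvdTotalUpToIdempotent_quotient [Ring.KrullDimLE 1 R]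
    (hR : IsArithmeticalRing R) {d : R} (hd : d ∈ nonZeroDivisors R) :
    IsDvdTotalUpToIdempotent (R ⧸ Ideal.span {d}) :=
  have : Ring.KrullDimLE 0 (R ⧸ Ideal.span {d}) := krullDimLE_quotient_span_singleton hd
  (hR.of_surjective _ Ideal.Quotient.mk_surjective).isDvdTotalUpToIdempotent

end Rings

section IdempotentGlue

variable {A B : Type*} [CommRing A] [Ring B] [Algebra A B] {e : A}

/-- For an idempotent `e`, the element that agrees with `x` where `e = 0` and with `y` where
`e = 1`. -/
def idempotentGlue (e : A) (x y : B) : B := (1 - e) • x + e • y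

lemma idempotentGlue_self (e : A) (x : B) : idempotentGlue e x x = x := by
  rw [idempotentGlue, ← add_smul, sub_add_cancel, one_smul]

lemma idempotentGlue_mul (he : IsIdempotentElem e) (x x' y y' : B) :
    idempotentGlue e x y * idempotentGlue e x' y' = idempotentGlue e (x * x') (y * y') := by
  simp only [idempotentGlue, mul_add, add_mul, smul_mul_smul_comm, he.eq, he.one_sub.eq,
    he.one_sub_mul_self, he.mul_one_sub_self, zero_smul, add_zero, zero_add]

lemma isUnit_idempotentGlue (he : IsIdempotentElem e) {x y : B} (hx : IsUnit x) (hy : IsUnit y) :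
    IsUnit (idempotentGlue e x y) := by
  obtain ⟨x, rfl⟩ := hx
  obtain ⟨y, rfl⟩ := hy
  refine isUnit_iff_exists.2 ⟨idempotentGlue e ↑x⁻¹ ↑y⁻¹, ?_, ?_⟩ <;>
    simp [idempotentGlue_mul he, idempotentGlue_self]

lemma idempotentGlue_dvd_left (he : IsIdempotentElem e) {a b : A} (h : b ∣ e * a) :
    idempotentGlue e a b ∣ a := by
  obtain ⟨r, hr⟩ := h
  have hglue : idempotentGlue e a (e * a) = a := by
    simp only [idempotentGlue, smul_eq_mul]
    linear_combination a * he.eq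
  refine ⟨idempotentGlue e 1 r, ?_⟩
  rw [idempotentGlue_mul he, mul_one, ← hr, hglue]

lemma idempotentGlue_dvd_right (he : IsIdempotentElem e) {a b : A} (h : a ∣ (1 - e) * b) :
    idempotentGlue e a b ∣ b := by
  have hsymm : idempotentGlue e a b = idempotentGlue (1 - e) b a := by
    rw [idempotentGlue, idempotentGlue, sub_sub_cancel, add_comm]
  rw [hsymm]
  exact idempotentGlue_dvd_left he.one_sub h

end IdempotentGlue

section MatrixEquivalent

open Matrix

variable {A m : Type*} [CommRing A] [Fintype m] [DecidableEq m]

/-- Equivalence of square matrices in the sense of the Smith normal form: equality up to invertible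
row and column transformations. -/
def MatrixEquivalent (N N' : Matrix m m A) : Prop :=
  ∃ P Q : Matrix m m A, IsUnit P ∧ IsUnit Q ∧ P * N * Q = N'

namespace MatrixEquivalent

variable {N N' N'' : Matrix m m A}

lemma refl (N : Matrix m m A) : MatrixEquivalent N N :=
  ⟨1, 1, isUnit_one, isUnit_one, by simp⟩

lemma trans (h : MatrixEquivalent N N') (h' : MatrixEquivalent N' N'') :
    MatrixEquivalent N N'' := by
  obtain ⟨P, Q, hP, hQ, rfl⟩ := h
  obtain ⟨P', Q', hP', hQ', rfl⟩ := h'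
  exact ⟨P' * P, Q * Q', hP'.mul hP, hQ.mul hQ', by simp only [mul_assoc]⟩

lemma dvd_apply (h : MatrixEquivalent N N') {g : A} (hg : ∀ i j, g ∣ N i j) (i j : m) :
    g ∣ N' i j := by
  obtain ⟨P, Q, -, -, rfl⟩ := h
  simp only [mul_apply]
  exact Finset.dvd_sum fun k _ ↦ (Finset.dvd_sum fun l _ ↦ (hg l k).mul_left _).mul_right _

lemma reindex {l : Type*} [Fintype l] [DecidableEq l] (h : MatrixEquivalent N N') (e : m ≃ l) :
    MatrixEquivalent (Matrix.reindex e e N) (Matrix.reindex e e N') := by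
  obtain ⟨P, Q, hP, hQ, rfl⟩ := h
  refine ⟨Matrix.reindex e e P, Matrix.reindex e e Q, (isUnit_submatrix_equiv _ _).2 hP,
    (isUnit_submatrix_equiv _ _).2 hQ, ?_⟩
  simp [submatrix_mul_equiv]

lemma idempotentGlue {e : A} (he : IsIdempotentElem e) (h : MatrixEquivalent N N')
    (h' : MatrixEquivalent N N'') : MatrixEquivalent N (idempotentGlue e N' N'') := by
  obtain ⟨P, Q, hP, hQ, rfl⟩ := h
  obtain ⟨P', Q', hP', hQ', rfl⟩ := h'
  refine ⟨_, _, isUnit_idempotentGlue he hP hP', isUnit_idempotentGlue he hQ hQ', ?_⟩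
  rw [← idempotentGlue_mul he, ← idempotentGlue_mul he, idempotentGlue_self]

lemma swap_mul_mul_swap (N : Matrix m m A) (i i' j j' : m) :
    MatrixEquivalent N (swap A i i' * N * swap A j j') :=
  ⟨_, _, .of_mul_eq_one _ (swap_mul_self i i'), .of_mul_eq_one _ (swap_mul_self j j'), rfl⟩

lemma fromBlocks {l : Type*} [Fintype l] [DecidableEq l] (G : Matrix l l A) {D D' : Matrix m m A}
    (h : MatrixEquivalent D D') :
    MatrixEquivalent (fromBlocks G 0 0 D) (fromBlocks G 0 0 D') := by
  obtain ⟨P, Q, hP, hQ, rfl⟩ := h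
  exact ⟨Matrix.fromBlocks 1 0 0 P, Matrix.fromBlocks 1 0 0 Q,
    isUnit_fromBlocks_zero₂₁.2 ⟨isUnit_one, hP⟩, isUnit_fromBlocks_zero₂₁.2 ⟨isUnit_one, hQ⟩,
    by simp [fromBlocks_multiply]⟩

lemma fromBlocks_mul_mul {l : Type*} [Fintype l] [DecidableEq l] (G : Matrix l l A)
    (V : Matrix m l A) (W : Matrix l m A) (D : Matrix m m A) :
    MatrixEquivalent (Matrix.fromBlocks G (G * W) (V * G) D)
      (Matrix.fromBlocks G 0 0 (D - V * G * W)) :=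
  ⟨Matrix.fromBlocks 1 0 (-V) 1, Matrix.fromBlocks 1 (-W) 0 1,
    isUnit_fromBlocks_zero₁₂.2 ⟨isUnit_one, isUnit_one⟩,
    isUnit_fromBlocks_zero₂₁.2 ⟨isUnit_one, isUnit_one⟩,
    by simp [fromBlocks_multiply, sub_eq_neg_add, Matrix.mul_assoc]⟩

end MatrixEquivalent

lemma IsDvdTotalUpToIdempotent.exists_matrixEquivalent_apply_dvd (hA : IsDvdTotalUpToIdempotent A)
    (N : Matrix m m A) (k : m) :
    ∃ N', MatrixEquivalent N N' ∧ ∀ i j, N' k k ∣ N' i j := by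
  suffices hpivot : ∀ s : Finset (m × m),
      ∃ N', MatrixEquivalent N N' ∧ ∀ x ∈ s, N' k k ∣ N x.1 x.2 by
    obtain ⟨N', hN', hdvd⟩ := hpivot Finset.univ
    exact ⟨N', hN', hN'.dvd_apply fun i j ↦ hdvd (i, j) (Finset.mem_univ _)⟩
  intro s
  induction s using Finset.induction_on with
  | empty => exact ⟨N, .refl N, by simp⟩
  | insert x s _ ih =>
    obtain ⟨N', hN', hdvd⟩ := ih
    obtain ⟨e, he, hx, hk⟩ := hA (N' k k) (N x.1 x.2)
    refine ⟨_, hN'.idempotentGlue he (.swap_mul_mul_swap N k x.1 k x.2), ?_⟩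
    have hentry : idempotentGlue e N' (swap A k x.1 * N * swap A k x.2) k k =
        idempotentGlue e (N' k k) (N x.1 x.2) := by
      simp [idempotentGlue]
    rw [hentry, Finset.forall_mem_insert]
    exact ⟨idempotentGlue_dvd_right he hk,
      fun z hz ↦ (idempotentGlue_dvd_left he hx).trans (hdvd z hz)⟩

lemma exists_matrixEquivalent_fromBlocks_of_dvd (N : Matrix (Unit ⊕ m) (Unit ⊕ m) A)
    (hN : ∀ i j, N (.inl ()) (.inl ()) ∣ N i j) :
    ∃ D, MatrixEquivalent N (fromBlocks (diagonal fun _ ↦ N (.inl ()) (.inl ())) 0 0 D) := by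
  choose q hq using hN
  let G : Matrix Unit Unit A := diagonal fun _ ↦ N (.inl ()) (.inl ())
  let V : Matrix m Unit A := of fun i _ ↦ q (.inr i) (.inl ())
  let W : Matrix Unit m A := of fun _ j ↦ q (.inl ()) (.inr j)
  have hblocks : N = fromBlocks G (G * W) (V * G) N.toBlocks₂₂ := by
    conv_lhs => rw [← fromBlocks_toBlocks N]
    congr 1 <;> ext i j
    · simpa [G, W, toBlocks₁₂] using hq (.inl ()) (.inr j)
    · simpa [G, V, toBlocks₂₁, mul_comm] using hq (.inr i) (.inl ())
  refine ⟨N.toBlocks₂₂ - V * G * W, ?_⟩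
  conv_lhs => rw [hblocks]
  exact .fromBlocks_mul_mul G V W _

theorem IsDvdTotalUpToIdempotent.exists_matrixEquivalent_diagonal
    (hA : IsDvdTotalUpToIdempotent A) {n : ℕ} (N : Matrix (Fin n) (Fin n) A) :
    ∃ c : Fin n → A, MatrixEquivalent N (diagonal c) ∧ ∀ i j, i ≤ j → c i ∣ c j := by
  induction n with
  | zero => exact ⟨0, Subsingleton.elim N (diagonal 0) ▸ .refl N, fun i ↦ i.elim0⟩
  | succ n ih =>
    let e : Unit ⊕ Fin n ≃ Fin (n + 1) :=
      (Equiv.sumComm _ _).trans ((Equiv.optionEquivSumPUnit _).symm.trans (finSuccEquiv n).symm)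
    obtain ⟨N', hNN', hdvd⟩ :=
      hA.exists_matrixEquivalent_apply_dvd (reindex e.symm e.symm N) (.inl ())
    obtain ⟨D, hN'D⟩ := exists_matrixEquivalent_fromBlocks_of_dvd N' hdvd
    obtain ⟨c, hDc, hc⟩ := ih D
    set g := N' (.inl ()) (.inl ())
    have hgc : ∀ i, g ∣ c i := by
      intro i
      have hgD := (hN'D.trans (.fromBlocks _ hDc)).dvd_apply hdvd (.inr i) (.inr i)
      simpa using hgD
    refine ⟨Fin.cons g c, ?_, ?_⟩
    · have hdiag : reindex e e (fromBlocks (diagonal fun _ ↦ g) 0 0 (diagonal c)) =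
          diagonal (Fin.cons g c) := by
        rw [fromBlocks_diagonal, reindex_apply, submatrix_diagonal_equiv]
        congr 1
        ext i
        cases i using Fin.cases <;> simp [e]
      have h := ((hNN'.trans hN'D).trans (.fromBlocks _ hDc)).reindex e
      rw [hdiag] at h
      simpa using h
    · intro i j hij
      cases i using Fin.cases <;> cases j using Fin.cases
      · simp
      · simpa using hgc _
      · simp at hij
      · simpa using hc _ _ (by simpa using hij)

end MatrixEquivalent

section Cokernel

open Matrix

lemma exists_map_eq_of_surjective {m n α β : Type*} {f : α → β} (hf : Function.Surjective f)
    (N : Matrix m n β) : ∃ N' : Matrix m n α, N'.map f = N :=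
  ⟨N.map (Function.surjInv hf), by ext; simp [Function.surjInv_eq hf]⟩

variable {R A ι : Type*} [CommRing R] [CommRing A] [Fintype ι]

lemma isCoprime_of_isUnit_map {f : R →+* A} (hf : Function.Surjective f) {u d : R}
    (hker : RingHom.ker f ≤ Ideal.span {d}) (hu : IsUnit (f u)) : IsCoprime u d := by
  obtain ⟨v, hv⟩ := hu.exists_left_inv
  obtain ⟨v, rfl⟩ := hf v
  obtain ⟨w, hw⟩ : d ∣ 1 - v * u :=
    Ideal.mem_span_singleton.1 (hker (by simp [RingHom.mem_ker, hv]))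
  exact ⟨v, w, by linear_combination -hw⟩

lemma prod_comap_span_singleton_le_ker {f : R →+* A} (hf : Function.Surjective f) {c : ι → A}
    (hc : ∏ i, c i = 0) : ∏ i, (Ideal.span {c i}).comap f ≤ RingHom.ker f := by
  rw [RingHom.ker, ← Ideal.map_le_iff_le_comap, ← Ideal.mapHom_apply, map_prod]
  simp_rw [Ideal.mapHom_apply, Ideal.map_comap_of_surjective f hf, Ideal.prod_span_singleton, hc,
    Ideal.span_singleton_zero, le_refl]

lemma mem_prod_of_isCoprime {a : ι → Ideal R} {u d : R} (hd : ∀ i, d ∈ a i)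
    (hu : IsCoprime u d) (hud : u * d ∈ ∏ i, a i) : d ∈ ∏ i, a i := by
  have hpow : d ^ Fintype.card ι ∈ ∏ i, a i := by
    simpa using Ideal.prod_mem_prod fun i (_ : i ∈ Finset.univ) ↦ hd i
  obtain ⟨x, y, hxy⟩ : IsCoprime u (d ^ Fintype.card ι) := hu.pow_right
  have hsum : d = x * (u * d) + y * d * d ^ Fintype.card ι := by
    linear_combination (-d) * hxy
  rw [hsum]
  exact add_mem (Ideal.mul_mem_left _ _ hud) (Ideal.mul_mem_left _ _ hpow)

variable [DecidableEq ι]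

lemma mem_range_mulVecLin_iff_comp_mem {M : Matrix ι ι R} {f : R →+* A}
    (hf : Function.Surjective f) (hker : RingHom.ker f ≤ Ideal.span {M.det}) (x : ι → R) :
    x ∈ LinearMap.range M.mulVecLin ↔ f ∘ x ∈ LinearMap.range (M.map f).mulVecLin := by
  constructor
  · rintro ⟨y, rfl⟩
    exact ⟨f ∘ y, funext fun i ↦ (RingHom.map_mulVec f M y i).symm⟩
  · rintro ⟨y, hy⟩
    obtain ⟨y, rfl⟩ := hf.comp_left y
    have hdvd (i : ι) : M.det ∣ (x - M *ᵥ y) i := by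
      rw [← Ideal.mem_span_singleton]
      refine hker ?_
      rw [RingHom.mem_ker, Pi.sub_apply, map_sub, RingHom.map_mulVec]
      exact sub_eq_zero.2 (congrFun hy i).symm
    choose w hw using hdvd
    refine ⟨y + M.adjugate *ᵥ w, ?_⟩
    have hadj : M *ᵥ (M.adjugate *ᵥ w) = x - M *ᵥ y := by
      ext i
      rw [mulVec_mulVec, mul_adjugate, smul_mulVec, one_mulVec, hw, Pi.smul_apply, smul_eq_mul]
    rw [mulVecLin_apply, mulVec_add, hadj, add_sub_cancel]

lemma mem_range_mulVecLin_iff_of_mul_mul_eq_diagonal {N P Q : Matrix ι ι A} {c : ι → A}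
    (hP : IsUnit P) (hQ : IsUnit Q) (h : P * N * Q = diagonal c) (y : ι → A) :
    y ∈ LinearMap.range N.mulVecLin ↔ ∀ i, c i ∣ (P *ᵥ y) i := by
  have hP' : Function.Injective P.mulVec := mulVec_injective_of_isUnit hP
  have hQ' : Function.Surjective Q.mulVec := mulVec_surjective_iff_isUnit.2 hQ
  calc y ∈ LinearMap.range N.mulVecLin
    _ ↔ ∃ z, N *ᵥ z = y := Iff.rfl
    _ ↔ ∃ z, N *ᵥ (Q *ᵥ z) = y := hQ'.exists
    _ ↔ ∃ z, diagonal c *ᵥ z = P *ᵥ y := by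
      simp_rw [← h, ← mulVec_mulVec, hP'.eq_iff]
    _ ↔ ∀ i, c i ∣ (P *ᵥ y) i := by
      simp_rw [funext_iff, mulVec_diagonal, Dvd.dvd, eq_comm, Classical.skolem]

lemma MatrixEquivalent.nonempty_quotient_range_linearEquiv {M : Matrix ι ι R} {f : R →+* A}
    (hf : Function.Surjective f) (hker : RingHom.ker f ≤ Ideal.span {M.det}) {c : ι → A}
    (h : MatrixEquivalent (M.map f) (diagonal c)) :
    Nonempty (((ι → R) ⧸ LinearMap.range M.mulVecLin) ≃ₗ[R]
      ((i : ι) → R ⧸ (Ideal.span {c i}).comap f)) := by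
  obtain ⟨P, Q, hP, hQ, hPQ⟩ := h
  obtain ⟨p, rfl⟩ := exists_map_eq_of_surjective hf P
  let F : (ι → R) →ₗ[R] (i : ι) → R ⧸ (Ideal.span {c i}).comap f :=
    LinearMap.pi fun i ↦ Submodule.mkQ _ ∘ₗ LinearMap.proj i ∘ₗ p.mulVecLin
  have hF : Function.Surjective F := by
    intro y
    choose x hx using fun i ↦ Submodule.mkQ_surjective _ (y i)
    obtain ⟨z, hz⟩ := mulVec_surjective_iff_isUnit.2 hP (f ∘ x)
    obtain ⟨z, rfl⟩ := hf.comp_left z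
    refine ⟨z, funext fun i ↦ ?_⟩
    have hzx : f ((p *ᵥ z) i) = f (x i) := (RingHom.map_mulVec f p z i).trans (congrFun hz i)
    rw [← hx i]
    exact (Submodule.Quotient.eq _).2 (by simp [hzx])
  have hkerF : LinearMap.ker F = LinearMap.range M.mulVecLin := by
    ext x
    rw [mem_range_mulVecLin_iff_comp_mem hf hker,
      mem_range_mulVecLin_iff_of_mul_mul_eq_diagonal hP hQ hPQ, LinearMap.mem_ker, funext_iff]
    refine forall_congr' fun i ↦ ?_
    rw [← RingHom.map_mulVec, ← Ideal.mem_span_singleton]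
    exact Submodule.Quotient.mk_eq_zero _
  exact ⟨(Submodule.quotEquivOfEq _ _ hkerF.symm).trans (F.quotKerEquivOfSurjective hF)⟩

lemma det_mem_prod_of_forall_mem {a : ι → Ideal R} {N : Matrix ι ι R} (h : ∀ i j, N i j ∈ a i) :
    N.det ∈ ∏ i, a i := by
  rw [det_apply]
  refine Submodule.sum_mem _ fun σ _ ↦ ?_
  rw [← Equiv.prod_comp σ a, Units.smul_def, zsmul_eq_mul]
  exact Ideal.mul_mem_left _ _ (Ideal.prod_mem_prod fun i _ ↦ h _ _)

lemma MatrixEquivalent.prod_comap_span_singleton {M : Matrix ι ι R} {f : R →+* A}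
    (hf : Function.Surjective f) (hker : RingHom.ker f = Ideal.span {M.det}) {c : ι → A}
    (h : MatrixEquivalent (M.map f) (diagonal c)) :
    ∏ i, (Ideal.span {c i}).comap f = Ideal.span {M.det} := by
  obtain ⟨P, Q, hP, hQ, hPQ⟩ := h
  obtain ⟨p, rfl⟩ := exists_map_eq_of_surjective hf P
  obtain ⟨q, rfl⟩ := exists_map_eq_of_surjective hf Q
  have hmap_det (N : Matrix ι ι R) : f N.det = (N.map f).det := f.map_det N
  have hdet : f M.det = 0 := by
    rw [← RingHom.mem_ker, hker]
    exact Ideal.mem_span_singleton_self _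
  apply le_antisymm
  · rw [← hker]
    apply prod_comap_span_singleton_le_ker hf
    rw [← det_diagonal, ← hPQ, det_mul, det_mul, ← hmap_det M, hdet, mul_zero, zero_mul]
  · rw [Ideal.span_singleton_le_iff_mem]
    have hunit : IsUnit (f (p.det * q.det)) := by
      rw [map_mul, hmap_det, hmap_det]
      exact ((isUnit_iff_isUnit_det _).1 hP).mul ((isUnit_iff_isUnit_det _).1 hQ)
    refine mem_prod_of_isCoprime (fun i ↦ by simp [hdet])
      (isCoprime_of_isUnit_map hf hker.le hunit) ?_
    have hentry (i j : ι) : (p * M * q) i j ∈ (Ideal.span {c i}).comap f := by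
      have hij : f ((p * M * q) i j) = diagonal c i j := by
        rw [← hPQ, ← Matrix.map_mul, ← Matrix.map_mul, map_apply]
      rw [Ideal.mem_comap, Ideal.mem_span_singleton, hij, diagonal_apply]
      split_ifs
      exacts [dvd_rfl, dvd_zero _]
    have hmem := det_mem_prod_of_forall_mem hentry
    rwa [det_mul, det_mul, mul_right_comm] at hmem

end Cokernel

theorem stmt_18_general {R : Type*} [CommRing R] {n : ℕ} (M : Matrix (Fin n) (Fin n) R)
    (hM : IsDvdTotalUpToIdempotent (R ⧸ Ideal.span {M.det})) :
    ∃ a : Fin n → Ideal R,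
      (∀ i j : Fin n, i ≤ j → a j ≤ a i) ∧
      (∀ i, M.det ∈ a i) ∧
      (∏ i, a i) = Ideal.span {M.det} ∧
      Nonempty (((Fin n → R) ⧸ LinearMap.range M.mulVecLin) ≃ₗ[R]
        ((i : Fin n) → R ⧸ a i)) := by
  let f := Ideal.Quotient.mk (Ideal.span {M.det})
  have hf : Function.Surjective f := Ideal.Quotient.mk_surjective
  have hker : RingHom.ker f = Ideal.span {M.det} := Ideal.mk_ker
  obtain ⟨c, hMc, hc⟩ := hM.exists_matrixEquivalent_diagonal (M.map f)
  refine ⟨fun i ↦ (Ideal.span {c i}).comap f, fun i j hij ↦ ?_, fun i ↦ ?_,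
    hMc.prod_comap_span_singleton hf hker, hMc.nonempty_quotient_range_linearEquiv hf hker.le⟩
  · exact Ideal.comap_mono (Ideal.span_singleton_le_span_singleton.2 (hc i j hij))
  · exact Ideal.comap_mono bot_le (hker.ge (Ideal.mem_span_singleton_self M.det))

/-- Over a Prüfer domain of Krull dimension at most 1, for a square matrix `M` with
nonzero determinant `d`, the cokernel of `M` is isomorphic to `⊕ᵢ R⧸aᵢ` for a decreasing
chain of ideals `aᵢ` containing `d` with `∏ᵢ aᵢ = ⟨d⟩`. -/
theorem stmt_18 {R : Type*} [CommRing R] [IsDomain R]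
    (hpruf : ∀ I : Ideal R, I.FG → I ≠ ⊥ →
      ∃ (J : Ideal R) (c : R), J.FG ∧ c ≠ 0 ∧ I * J = Ideal.span {c})
    (hdim : ∀ p q r : Ideal R, p.IsPrime → q.IsPrime → r.IsPrime → p < q → q < r → False)
    {n : ℕ} (M : Matrix (Fin n) (Fin n) R) (hd : M.det ≠ 0) :
    ∃ a : Fin n → Ideal R,
      (∀ i j : Fin n, i ≤ j → a j ≤ a i) ∧
      (∀ i, M.det ∈ a i) ∧
      (∏ i, a i) = Ideal.span {M.det} ∧
      Nonempty (((Fin n → R) ⧸ LinearMap.range M.mulVecLin) ≃ₗ[R]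
        ((i : Fin n) → R ⧸ a i)) := by
  have hdim_le : Ring.KrullDimLE 1 R := krullDimLE_one_of_forall_not_lt_lt hdim
  have harith : IsArithmeticalRing R := .of_forall_span_pair_invertible fun a b hab ↦ by
    obtain ⟨J, c, -, hc, hJ⟩ := hpruf (.span {a, b}) (Submodule.fg_span (Set.toFinite _)) hab
    exact ⟨J, c, (IsRegular.of_ne_zero hc).left, hJ⟩
  exact stmt_18_general M
    (harith.isDvdTotalUpToIdempotent_quotient (mem_nonZeroDivisors_of_ne_zero hd))
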